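/- arXiv:1603.00915 — 4 statements merged into one kernel-verified Lean document; each statement's English description precedes it below -/
import Mathlib

section
/- Let A₁, A₂, A₃ : I → ℂ be differentiable on an interval I and satisfy A₁' = i·conj(A₂A₃), A₂' = i·conj(A₁A₃), A₃' = i·conj(A₁A₂). Then the Hamiltonian H(τ) = A₁(τ)A₂(τ)A₃(τ) + conj(A₁(τ)A₂(τ)A₃(τ)) (equivalently, 2·Re(A₁A₂A₃)) is constant on I. -/
open ComplexConjugate

/-- The Hamiltonian H = A₁A₂A₃ + conj(A₁A₂A₃) is constant along solutions of
the spatially uniform three-wave system. -/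
theorem stmt_3 (I : Set ℝ) (hI : I.OrdConnected) (A₁ A₂ A₃ : ℝ → ℂ)
    (h₁ : ∀ τ ∈ I, HasDerivWithinAt A₁ (Complex.I * conj (A₂ τ * A₃ τ)) I τ)
    (h₂ : ∀ τ ∈ I, HasDerivWithinAt A₂ (Complex.I * conj (A₁ τ * A₃ τ)) I τ)
    (h₃ : ∀ τ ∈ I, HasDerivWithinAt A₃ (Complex.I * conj (A₁ τ * A₂ τ)) I τ) :
    ∀ σ ∈ I, ∀ τ ∈ I,
      A₁ σ * A₂ σ * A₃ σ + conj (A₁ σ * A₂ σ * A₃ σ)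
        = A₁ τ * A₂ τ * A₃ τ + conj (A₁ τ * A₂ τ * A₃ τ) := by
  intro σ hσ τ hτ
  -- `(A₁A₂A₃)' = i (|A₂A₃|² + |A₁A₃|² + |A₁A₂|²)` is purely imaginary, so it cancels against
  -- its own conjugate and `H' = 0` on `I`.
  have hH : ∀ t ∈ I, HasDerivWithinAt
      (fun t => A₁ t * A₂ t * A₃ t + conj (A₁ t * A₂ t * A₃ t)) 0 I t := by
    intro t ht
    have hP := ((h₁ t ht).mul (h₂ t ht)).mul (h₃ t ht)
    refine (hP.add hP.star).congr_deriv ?_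
    simp only [← starRingEnd_apply, Pi.mul_apply, map_add, map_mul, Complex.conj_I,
      Complex.conj_conj]
    ring
  -- The mean value inequality with derivative bound `0` on the convex set `I`.
  have h := hI.convex.norm_image_sub_le_of_norm_hasDerivWithin_le (C := 0) hH (by simp) hτ hσ
  rw [zero_mul, norm_le_zero_iff, sub_eq_zero] at h
  exact h
end

section
/- Let A₁, A₂, A₃ : I → ℂ be differentiable on an interval I containing 0 and satisfy A₁' = i·conj(A₂A₃), A₂' = i·conj(A₁A₃), A₃' = i·conj(A₁A₂). If Re(A₁(0)A₂(0)A₃(0)) ≠ 0 (equivalently, the phase sum θ₁+θ₂+θ₃ at τ=0 is neither π/2 nor 3π/2), then for every τ ∈ I and every j ∈ {1,2,3}, A_j(τ) ≠ 0. -/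
open ComplexConjugate

/-!
The real part of `A₁ A₂ A₃` is a conserved quantity: by the product rule
`(A₁ A₂ A₃)' = i (|A₂ A₃|² + |A₁ A₃|² + |A₁ A₂|²)`, which is purely imaginary. Hence
`Re (A₁ A₂ A₃)` keeps its nonzero initial value on `I`, and no factor can vanish.
-/

/-- If Re(A₁A₂A₃) ≠ 0 initially (i.e. the initial phase sum is neither π/2 nor
3π/2), then no component of the solution ever vanishes. -/
theorem stmt_6 (I : Set ℝ) (hI : I.OrdConnected) (h0 : (0 : ℝ) ∈ I)
    (A₁ A₂ A₃ : ℝ → ℂ)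
    (h₁ : ∀ τ ∈ I, HasDerivWithinAt A₁ (Complex.I * conj (A₂ τ * A₃ τ)) I τ)
    (h₂ : ∀ τ ∈ I, HasDerivWithinAt A₂ (Complex.I * conj (A₁ τ * A₃ τ)) I τ)
    (h₃ : ∀ τ ∈ I, HasDerivWithinAt A₃ (Complex.I * conj (A₁ τ * A₂ τ)) I τ)
    (hRe : (A₁ 0 * A₂ 0 * A₃ 0).re ≠ 0) :
    ∀ τ ∈ I, A₁ τ ≠ 0 ∧ A₂ τ ≠ 0 ∧ A₃ τ ≠ 0 := by
  have hderiv : ∀ τ ∈ I, HasDerivWithinAt (fun t => (A₁ t * A₂ t * A₃ t).re) 0 I τ := by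
    intro τ hτ
    have h := Complex.reCLM.hasFDerivAt.comp_hasDerivWithinAt τ
      (((h₁ τ hτ).mul (h₂ τ hτ)).mul (h₃ τ hτ))
    refine h.congr_deriv ?_
    simp
    ring
  intro τ hτ
  have hconst : (A₁ τ * A₂ τ * A₃ τ).re = (A₁ 0 * A₂ 0 * A₃ 0).re := by
    have h := hI.convex.norm_image_sub_le_of_norm_hasDerivWithin_le (C := 0) hderiv
      (fun _ _ => by simp) h0 hτ
    rw [zero_mul] at h
    exact sub_eq_zero.mp (norm_le_zero_iff.mp h)
  rw [← hconst] at hRe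
  refine ⟨?_, ?_, ?_⟩ <;> intro h <;> simp [h] at hRe
end

section
/- Let c ∈ ℝⁿ, let a₁,…,a_n > 0, and let r : ℝⁿ × [0,T) → ℝ be continuously differentiable, periodic in x with periods 2a_k in the k-th coordinate, and suppose that for every ξ ∈ ℝⁿ the function τ ↦ r(ξ + cτ, τ) is nondecreasing on [0,T). Then the function m(τ) = min_{x∈ℝⁿ} r(x,τ) (the minimum exists by periodicity and continuity) is nondecreasing and locally Lipschitz on [0,T). -/
/-!
Monotonicity: if `x` minimises `r(·,τ')`, follow the characteristic through `(x,τ')` back to time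
`τ ≤ τ'`; this gives `m τ ≤ r(x - (τ' - τ)c, τ) ≤ r(x,τ') = m τ'`.

Lipschitz bound: a `C¹` function on the convex slab is Lipschitz near each of its points, so
compactness of a period box gives one Lipschitz constant in time, valid near `τ₀` for all `x` in the
box (`exists_uniform_lipschitz_time`). Periodicity (`exists_mem_box`) lets every minimiser be taken
in the box, and a minimum of functions that are `K`-Lipschitz in `τ` is `K`-Lipschitz.
-/

open ComplexConjugate

/-- Every value of a function with period `p k > 0` in each coordinate `k` is taken in the closed
period box. -/
lemma exists_mem_box {n : ℕ} (p : Fin n → ℝ) (hp : ∀ k, 0 < p k) (f : (Fin n → ℝ) → ℝ)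
    (hf : ∀ k, Function.Periodic f (p k • (Pi.single k 1 : Fin n → ℝ))) (x : Fin n → ℝ) :
    ∃ y ∈ Set.Icc (0 : Fin n → ℝ) p, f y = f x := by
  have hsum : Function.Periodic f
      (∑ k, (-toIcoDiv (hp k) 0 (x k)) • (p k • (Pi.single k 1 : Fin n → ℝ))) := by
    refine Finset.sum_induction _ (fun v => Function.Periodic f v) (fun _ _ h h' => h.add_period h')
      (fun x => by simp) (fun k _ => (hf k).zsmul _)
  refine ⟨_, ?_, hsum x⟩
  have hcoord : ∀ k, (x + ∑ j, (-toIcoDiv (hp j) 0 (x j)) •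
      (p j • (Pi.single j 1 : Fin n → ℝ))) k = toIcoMod (hp k) 0 (x k) := by
    intro k
    simp [Finset.sum_apply, Pi.single_apply, toIcoMod, sub_eq_add_neg]
    ring
  have hmem := fun k => toIcoMod_mem_Ico (hp k) 0 (x k)
  refine ⟨fun k => ?_, fun k => ?_⟩
  · rw [hcoord]; exact (hmem k).1
  · rw [hcoord]; simpa using (hmem k).2.le

/-- On a compact set of positions, a locally Lipschitz function on a slab is Lipschitz in time near
`τ₀`, with a constant independent of the position. -/
lemma exists_uniform_lipschitz_time {E : Type*} [PseudoMetricSpace E] {B : Set E}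
    (hB : IsCompact B) (r : E × ℝ → ℝ) (I : Set ℝ)
    (hr : LocallyLipschitzOn {p : E × ℝ | p.2 ∈ I} r) {τ₀ : ℝ} (h₀ : τ₀ ∈ I) :
    ∃ K : NNReal, ∃ u ∈ nhdsWithin τ₀ I, ∀ x ∈ B, ∀ τ ∈ u, ∀ τ' ∈ u,
      dist (r (x, τ)) (r (x, τ')) ≤ K * dist τ τ' := by
  refine hB.induction_on (p := fun s => ∃ K : NNReal, ∃ u ∈ nhdsWithin τ₀ I, ∀ x ∈ s, ∀ τ ∈ u,
    ∀ τ' ∈ u, dist (r (x, τ)) (r (x, τ')) ≤ K * dist τ τ') ?_ ?_ ?_ ?_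
  · exact ⟨0, Set.univ, Filter.univ_mem, by simp⟩
  · rintro s t hst ⟨K, u, hu, h⟩
    exact ⟨K, u, hu, fun x hx => h x (hst hx)⟩
  · rintro s t ⟨K, u, hu, h⟩ ⟨K', u', hu', h'⟩
    refine ⟨max K K', u ∩ u', Filter.inter_mem hu hu', ?_⟩
    rintro x (hx | hx) τ hτ τ' hτ'
    · exact (h x hx τ hτ.1 τ' hτ'.1).trans (by gcongr; exact le_max_left _ _)
    · exact (h' x hx τ hτ.2 τ' hτ'.2).trans (by gcongr; exact le_max_right _ _)
  · intro x _
    obtain ⟨K, t, ht, hK⟩ := hr (x := (x, τ₀)) h₀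
    have hS : {p : E × ℝ | p.2 ∈ I} = Set.univ ×ˢ I := by ext; simp
    rw [hS, nhdsWithin_prod_eq, nhdsWithin_univ] at ht
    obtain ⟨v, hv, u, hu, hvu⟩ := Filter.mem_prod_iff.1 ht
    refine ⟨v, mem_nhdsWithin_of_mem_nhds hv, K, u, hu, fun y hy τ hτ σ hσ => ?_⟩
    simpa [Prod.dist_eq] using
      hK.dist_le_mul (y, τ) (hvu ⟨hy, hτ⟩) (y, σ) (hvu ⟨hy, hσ⟩)

/-- If r is C¹, spatially periodic, and nondecreasing along the characteristics
x = ξ + cτ, then the spatial minimum m(τ) = min_x r(x,τ) is nondecreasing and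
locally Lipschitz on [0,T). -/
theorem stmt_17 (n : ℕ) (c : Fin n → ℝ) (a : Fin n → ℝ) (ha : ∀ k, 0 < a k)
    (T : ℝ) (r : (Fin n → ℝ) × ℝ → ℝ)
    (S : Set ((Fin n → ℝ) × ℝ)) (hS : S = {p | p.2 ∈ Set.Ico (0 : ℝ) T})
    (hr : ContDiffOn ℝ 1 r S)
    (hper : ∀ x : Fin n → ℝ, ∀ τ : ℝ, ∀ k : Fin n,
      r (x + (2 * a k) • (Pi.single k 1 : Fin n → ℝ), τ) = r (x, τ))
    (hmono : ∀ ξ : Fin n → ℝ, MonotoneOn (fun τ => r (ξ + τ • c, τ)) (Set.Ico (0 : ℝ) T))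
    (m : ℝ → ℝ)
    (hm : ∀ τ ∈ Set.Ico (0 : ℝ) T,
      (∃ x : Fin n → ℝ, r (x, τ) = m τ) ∧ ∀ x : Fin n → ℝ, m τ ≤ r (x, τ)) :
    MonotoneOn m (Set.Ico (0 : ℝ) T) ∧ LocallyLipschitzOn (Set.Ico (0 : ℝ) T) m := by
  constructor
  · intro τ hτ τ' hτ' hle
    obtain ⟨x, hx⟩ := (hm τ' hτ').1
    have h := hmono (x - τ' • c) hτ hτ' hle
    simp only [sub_add_cancel, hx] at h
    exact ((hm τ hτ).2 _).trans h
  · have hconv : Convex ℝ S := by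
      rw [hS]
      exact (convex_Ico (0 : ℝ) T).linear_preimage (LinearMap.snd ℝ (Fin n → ℝ) ℝ)
    have hlip : LocallyLipschitzOn {p : (Fin n → ℝ) × ℝ | p.2 ∈ Set.Ico (0 : ℝ) T} r := by
      rw [← hS]
      intro p hp
      obtain ⟨K, t, ht, h⟩ := (hr p hp).exists_lipschitzOnWith hconv
      exact ⟨K, t, ht, h⟩
    intro τ₀ h₀
    obtain ⟨K, u, hu, hK⟩ := exists_uniform_lipschitz_time
      (isCompact_Icc (a := (0 : Fin n → ℝ)) (b := fun k => 2 * a k)) r _ hlip h₀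
    refine ⟨K, u ∩ Set.Ico 0 T, Filter.inter_mem hu self_mem_nhdsWithin, ?_⟩
    refine LipschitzOnWith.of_le_add_mul K fun τ hτ σ hσ => ?_
    -- Compare both times at a minimiser for `σ` chosen in the period box.
    obtain ⟨x, hx⟩ := (hm σ hσ.2).1
    obtain ⟨y, hy, hyx⟩ := exists_mem_box (fun k => 2 * a k) (fun k => by have := ha k; positivity)
      (fun x => r (x, σ)) (fun k x => hper x σ k) x
    have h1 := (hm τ hτ.2).2 y
    have h2 := (abs_le.1 (hK y hy τ hτ.1 σ hσ.1)).2
    linarith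
end

section
/- Let c₁, c₂, c₃ ∈ ℝⁿ, let a₁,…,a_n > 0, let θ₁, θ₂, θ₃ ∈ ℝ be constants with θ₁ + θ₂ + θ₃ = π/2, and let r₁, r₂, r₃ : ℝⁿ → ℝ be continuously differentiable, strictly positive, and periodic with periods 2a_k in the k-th coordinate. Then there exist no continuously differentiable functions A₁, A₂, A₃ : ℝⁿ × [0,∞) → ℂ, periodic in x with the same periods, satisfying ∂_τ A₁ + c₁·∇A₁ = i·conj(A₂A₃), ∂_τ A₂ + c₂·∇A₂ = i·conj(A₁A₃), ∂_τ A₃ + c₃·∇A₃ = i·conj(A₁A₂) on ℝⁿ × [0,∞) with initial data A_j(x,0) = r_j(x)·e^{iθ_j} for j = 1,2,3; that is, every such solution blows up in finite time. -/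
/-!
After the rotation `B_j = e^{-iθ_j} A_j`, the condition `θ₁ + θ₂ + θ₃ = π/2` turns the system into
`∂_τ B₁ + c₁·∇B₁ = conj (B₂ B₃)` (and cyclically), with strictly positive initial data `r_j`.
By periodicity and compactness the `r_j` have a common lower bound `m > 0`.  Let
`φ(t) = 1 / (1/m - t)` be the solution of `φ' = φ²`, `φ(0) = m`.  The claim is that `Re B_j ≥ φ`
as long as `φ` exists; as `φ` blows up at time `1/m`, while a global solution is bounded on the
compact time interval `[0, 1/m]` (periodicity again), this is a contradiction.

To prove the claim on `[0, T]` with `T < 1/m`, let `L` bound `φ` and all the `|B_j|` there, and let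
`ε` be a common bound for the defects `|Im B_j|` and `φ - Re B_j`.  Writing
`Re (conj (B₂ B₃)) - φ² = Re B₂ (Re B₃ - φ) + φ (Re B₂ - φ) - Im B₂ Im B₃`
shows that along characteristics the defects grow at rate at most `4Lε` (`defect_rate`).
Integrating along characteristics (`defect_step`) and iterating, the defects are at most
`2L (4Lt)ᵏ / k!` for every `k`, hence `Re B_j ≥ φ` (`phi_le_re`).  No separate argument that
the `B_j` stay real, or stay positive, is needed.
-/

open ComplexConjugate

open Set

/-- The pointwise estimate behind the iteration: if both factors have modulus at most `L` and
defects (imaginary part, shortfall of the real part below `φ`) at most `ε`, then the defects of the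
product relative to `φ²` are at most `4Lε`. -/
lemma defect_rate {L φ ε : ℝ} {p q : ℂ} (hφ : 0 ≤ φ) (hφL : φ ≤ L)
    (hp : ‖p‖ ≤ L) (hq : ‖q‖ ≤ L) (hpi : |p.im| ≤ ε) (hqi : |q.im| ≤ ε)
    (hpr : φ - ε ≤ p.re) (hqr : φ - ε ≤ q.re) :
    |(conj (p * q)).im| ≤ 4 * L * ε ∧ φ ^ 2 - (conj (p * q)).re ≤ 4 * L * ε := by
  have hε : 0 ≤ ε := (abs_nonneg _).trans hpi
  have hL : 0 ≤ L := hφ.trans hφL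
  have hLε : 0 ≤ L * ε := mul_nonneg hL hε
  have a1 : |p.re| ≤ L := (Complex.abs_re_le_norm p).trans hp
  have a2 : |q.re| ≤ L := (Complex.abs_re_le_norm q).trans hq
  have a3 : |p.im| ≤ L := (Complex.abs_im_le_norm p).trans hp
  have b1 : |p.re * q.im| ≤ L * ε := by rw [abs_mul]; gcongr
  have b2 : |p.im * q.re| ≤ L * ε := by rw [abs_mul, mul_comm]; gcongr
  have b3 : |p.im * q.im| ≤ L * ε := by rw [abs_mul]; gcongr
  simp only [Complex.conj_re, Complex.conj_im, Complex.mul_re, Complex.mul_im]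
  rw [abs_le] at a1 a2 b1 b2 b3
  constructor
  · rw [abs_le]; constructor <;> linarith
  · have h1 : -(L * ε) ≤ φ * (p.re - φ) := by nlinarith
    -- A negative `p.re` is at least `-ε`, since `φ ≥ 0`.
    have h2 : -(2 * (L * ε)) ≤ p.re * (q.re - φ) := by
      rcases le_total 0 p.re with h | h
      · nlinarith
      · have : -ε ≤ p.re := by linarith
        nlinarith
    nlinarith

lemma hasDerivAt_inv_sub {s t : ℝ} (h : t < s) :
    HasDerivAt (fun t => (s - t)⁻¹) (((s - t)⁻¹) ^ 2) t := by
  have h0 : s - t ≠ 0 := by linarith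
  have := ((hasDerivAt_id t).const_sub s).inv h0
  refine this.congr_deriv ?_
  simp

lemma hasDerivAt_iter (C K : ℝ) (k : ℕ) (t : ℝ) :
    HasDerivAt (fun t => C * (K * t) ^ (k + 1) / (k + 1).factorial)
      (K * (C * (K * t) ^ k / k.factorial)) t := by
  have := ((((hasDerivAt_id t).const_mul K).pow (k + 1)).const_mul C).div_const
    ((k + 1).factorial : ℝ)
  refine this.congr_deriv ?_
  have : (k.factorial : ℝ) ≠ 0 := by positivity
  rw [Nat.factorial_succ]
  push_cast
  simp
  field_simp

/-- One step of the iteration, along a characteristic: `f` is the unknown there, and `p`, `q` are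
the values of the other two unknowns on the same characteristic. -/
lemma defect_step {L s T C : ℝ} {k : ℕ} {f p q : ℝ → ℂ} (hTs : T < s)
    (hL : ∀ t ∈ Icc 0 T, (s - t)⁻¹ ≤ L)
    (hf : ∀ t ∈ Ici (0 : ℝ), HasDerivWithinAt f (conj (p t * q t)) (Ici 0) t)
    (hp : ∀ t ∈ Icc 0 T, ‖p t‖ ≤ L) (hq : ∀ t ∈ Icc 0 T, ‖q t‖ ≤ L)
    (hpd : ∀ t ∈ Icc 0 T, |(p t).im| ≤ C * (4 * L * t) ^ k / k.factorial ∧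
      (s - t)⁻¹ - C * (4 * L * t) ^ k / k.factorial ≤ (p t).re)
    (hqd : ∀ t ∈ Icc 0 T, |(q t).im| ≤ C * (4 * L * t) ^ k / k.factorial ∧
      (s - t)⁻¹ - C * (4 * L * t) ^ k / k.factorial ≤ (q t).re)
    (h0i : (f 0).im = 0) (h0r : s⁻¹ ≤ (f 0).re) :
    ∀ t ∈ Icc 0 T, |(f t).im| ≤ C * (4 * L * t) ^ (k + 1) / (k + 1).factorial ∧
      (s - t)⁻¹ - C * (4 * L * t) ^ (k + 1) / (k + 1).factorial ≤ (f t).re := by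
  have hrate : ∀ t ∈ Icc 0 T, _ := fun t ht =>
    defect_rate (inv_nonneg.2 (by linarith [ht.2])) (hL t ht) (hp t ht) (hq t ht)
      (hpd t ht).1 (hqd t ht).1 (hpd t ht).2 (hqd t ht).2
  have him : ∀ t ∈ Ici (0 : ℝ),
      HasDerivWithinAt (fun t => (f t).im) (conj (p t * q t)).im (Ici 0) t := fun t ht =>
    Complex.imCLM.hasFDerivAt.comp_hasDerivWithinAt t (hf t ht)
  have hre : ∀ t ∈ Icc 0 T, HasDerivWithinAt (fun t => (s - t)⁻¹ - (f t).re)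
      (((s - t)⁻¹) ^ 2 - (conj (p t * q t)).re) (Ici 0) t := fun t ht =>
    (hasDerivAt_inv_sub (by linarith [ht.2])).hasDerivWithinAt.sub
      (Complex.reCLM.hasFDerivAt.comp_hasDerivWithinAt t (hf t ht.1))
  intro t ht
  constructor
  · have := image_norm_le_of_norm_deriv_right_le_deriv_boundary
      (f := fun t => (f t).im) (f' := fun t => (conj (p t * q t)).im) (a := 0) (b := T)
      (fun t ht => ((him t ht.1).mono Icc_subset_Ici_self).continuousWithinAt)
      (fun t ht => (him t ht.1).mono (Ici_subset_Ici.2 ht.1))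
      (by simp [h0i]) (hasDerivAt_iter C (4 * L) k)
      (fun t ht => (hrate t (Ico_subset_Icc_self ht)).1) ht
    exact this
  · have := image_le_of_deriv_right_le_deriv_boundary
      (f := fun t => (s - t)⁻¹ - (f t).re)
      (f' := fun t => ((s - t)⁻¹) ^ 2 - (conj (p t * q t)).re) (a := 0) (b := T)
      (B := fun t => C * (4 * L * t) ^ (k + 1) / (k + 1).factorial)
      (fun t ht => ((hre t ht).mono Icc_subset_Ici_self).continuousWithinAt)
      (fun t ht => (hre t (Ico_subset_Icc_self ht)).mono (Ici_subset_Ici.2 ht.1))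
      (by simpa using h0r)
      (fun t ht => (hasDerivAt_iter C (4 * L) k t).continuousAt.continuousWithinAt)
      (fun t ht => (hasDerivAt_iter C (4 * L) k t).hasDerivWithinAt)
      (fun t ht => (hrate t (Ico_subset_Icc_self ht)).2) ht
    linarith

/-- Comparison principle for the rotated system, written along characteristics: a solution bounded
by `L` on `[0, T]` whose initial data are real and at least `1/s`, with `s > T`, satisfies
`Re B₁ ≥ 1 / (s - t)` for `t ∈ [0, T]`. -/
lemma phi_le_re {E : Type*} [AddCommGroup E] [Module ℝ E] {c₁ c₂ c₃ : E} {B₁ B₂ B₃ : E × ℝ → ℂ}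
    {L s T : ℝ} (hTs : T < s)
    (hL : ∀ t ∈ Icc 0 T, (s - t)⁻¹ ≤ L)
    (h₁ : ∀ x, ∀ t ∈ Ici (0 : ℝ), HasDerivWithinAt (fun t => B₁ (x + t • c₁, t))
      (conj (B₂ (x + t • c₁, t) * B₃ (x + t • c₁, t))) (Ici 0) t)
    (h₂ : ∀ x, ∀ t ∈ Ici (0 : ℝ), HasDerivWithinAt (fun t => B₂ (x + t • c₂, t))
      (conj (B₁ (x + t • c₂, t) * B₃ (x + t • c₂, t))) (Ici 0) t)
    (h₃ : ∀ x, ∀ t ∈ Ici (0 : ℝ), HasDerivWithinAt (fun t => B₃ (x + t • c₃, t))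
      (conj (B₁ (x + t • c₃, t) * B₂ (x + t • c₃, t))) (Ici 0) t)
    (b₁ : ∀ x, ∀ t ∈ Icc 0 T, ‖B₁ (x, t)‖ ≤ L)
    (b₂ : ∀ x, ∀ t ∈ Icc 0 T, ‖B₂ (x, t)‖ ≤ L)
    (b₃ : ∀ x, ∀ t ∈ Icc 0 T, ‖B₃ (x, t)‖ ≤ L)
    (i₁ : ∀ x, (B₁ (x, 0)).im = 0 ∧ s⁻¹ ≤ (B₁ (x, 0)).re)
    (i₂ : ∀ x, (B₂ (x, 0)).im = 0 ∧ s⁻¹ ≤ (B₂ (x, 0)).re)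
    (i₃ : ∀ x, (B₃ (x, 0)).im = 0 ∧ s⁻¹ ≤ (B₃ (x, 0)).re)
    (x : E) {t : ℝ} (ht : t ∈ Icc 0 T) : (s - t)⁻¹ ≤ (B₁ (x, t)).re := by
  let P (k : ℕ) (B : E × ℝ → ℂ) : Prop := ∀ x, ∀ t ∈ Icc 0 T,
    |(B (x, t)).im| ≤ 2 * L * (4 * L * t) ^ k / k.factorial ∧
      (s - t)⁻¹ - 2 * L * (4 * L * t) ^ k / k.factorial ≤ (B (x, t)).re
  have zero : ∀ B : E × ℝ → ℂ, (∀ x, ∀ t ∈ Icc 0 T, ‖B (x, t)‖ ≤ L) → P 0 B := by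
    intro B hB x t ht
    have h1 := (Complex.abs_im_le_norm _).trans (hB x t ht)
    have h2 := abs_le.1 ((Complex.abs_re_le_norm _).trans (hB x t ht))
    have h3 := (norm_nonneg _).trans (hB x t ht)
    have h4 := hL t ht
    simp only [pow_zero, Nat.factorial_zero, Nat.cast_one]
    constructor <;> linarith
  have step : ∀ (k : ℕ) (c : E) (F G H : E × ℝ → ℂ),
      (∀ x, ∀ t ∈ Ici (0 : ℝ), HasDerivWithinAt (fun t => F (x + t • c, t))
        (conj (G (x + t • c, t) * H (x + t • c, t))) (Ici 0) t) →
      (∀ x, ∀ t ∈ Icc 0 T, ‖G (x, t)‖ ≤ L) → (∀ x, ∀ t ∈ Icc 0 T, ‖H (x, t)‖ ≤ L) →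
      (∀ x, (F (x, 0)).im = 0 ∧ s⁻¹ ≤ (F (x, 0)).re) → P k G → P k H → P (k + 1) F := by
    intro k c F G H hF hG hH hi pG pH x t ht
    -- The characteristic through `(x, t)` starts at `x - t • c`.
    have := defect_step hTs hL (hF (x - t • c)) (fun t ht => hG _ t ht) (fun t ht => hH _ t ht)
      (fun t ht => pG _ t ht) (fun t ht => pH _ t ht) (by simpa using (hi _).1)
      (by simpa using (hi (x - t • c)).2) t ht
    simpa only [sub_add_cancel] using this
  have all : ∀ k, P k B₁ ∧ P k B₂ ∧ P k B₃ := by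
    intro k
    induction k with
    | zero => exact ⟨zero _ b₁, zero _ b₂, zero _ b₃⟩
    | succ k ih =>
      obtain ⟨p₁, p₂, p₃⟩ := ih
      exact ⟨step k c₁ _ _ _ h₁ b₂ b₃ i₁ p₂ p₃, step k c₂ _ _ _ h₂ b₁ b₃ i₂ p₁ p₃,
        step k c₃ _ _ _ h₃ b₁ b₂ i₃ p₁ p₂⟩
  have lim : Filter.Tendsto
      (fun k : ℕ => (s - t)⁻¹ - 2 * L * ((4 * L * t) ^ k / k.factorial)) Filter.atTop
      (nhds ((s - t)⁻¹ - 2 * L * 0)) :=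
    ((FloorSemiring.tendsto_pow_div_factorial_atTop (4 * L * t)).const_mul _).const_sub _
  rw [mul_zero, sub_zero] at lim
  refine le_of_tendsto' lim fun k => ?_
  rw [← mul_div_assoc]
  exact ((all k).1 x t ht).2

/-- Every point is equivalent, modulo the period lattice, to a point of a compact box. -/
lemma exists_mem_box_s19 {n : ℕ} {a : Fin n → ℝ} (ha : ∀ k, 0 < a k) (x : Fin n → ℝ) :
    ∃ y ∈ Icc (0 : Fin n → ℝ) (fun k => 2 * a k), ∀ {α : Type} (f : (Fin n → ℝ) → α),
      (∀ x k, f (x + (2 * a k) • (Pi.single k 1 : Fin n → ℝ)) = f x) → f x = f y := by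
  have ha' : ∀ k, 0 < 2 * a k := fun k => by linarith [ha k]
  refine ⟨fun k => toIcoMod (ha' k) 0 (x k), ⟨fun k => ?_, fun k => ?_⟩, fun f hf => ?_⟩
  · exact left_le_toIcoMod (ha' k) 0 (x k)
  · simpa using (toIcoMod_lt_right (ha' k) 0 (x k)).le
  · have hper : Function.Periodic f
        (∑ k, toIcoDiv (ha' k) 0 (x k) • ((2 * a k) • (Pi.single k 1 : Fin n → ℝ))) :=
      Finset.sum_induction _ (Function.Periodic f) (fun _ _ h h' => h.add_period h')
        (fun x => by simp) fun k _ => Function.Periodic.zsmul (fun x => hf x k) _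
    refine Eq.trans (congrArg f ?_) (hper _)
    ext j
    simp only [Pi.add_apply, Finset.sum_apply, Pi.smul_apply, Pi.single_apply, smul_eq_mul,
      mul_ite, mul_one, mul_zero, smul_ite, smul_zero, Finset.sum_ite_eq, Finset.mem_univ, if_true]
    exact (toIcoMod_add_toIcoDiv_zsmul (ha' j) 0 (x j)).symm

/-- A positive continuous function that is periodic with respect to the box is bounded below by a
positive constant. -/
lemma exists_pos_le {n : ℕ} {a : Fin n → ℝ} (ha : ∀ k, 0 < a k) {r : (Fin n → ℝ) → ℝ}
    (hr : Continuous r) (hpos : ∀ x, 0 < r x)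
    (hper : ∀ x k, r (x + (2 * a k) • (Pi.single k 1 : Fin n → ℝ)) = r x) :
    ∃ m > 0, ∀ x, m ≤ r x := by
  obtain ⟨y, -, hy⟩ := (isCompact_Icc (a := (0 : Fin n → ℝ)) (b := fun k => 2 * a k)).exists_isMinOn
    ⟨0, le_rfl, fun k => by simpa using (ha k).le⟩ hr.continuousOn
  refine ⟨r y, hpos y, fun x => ?_⟩
  obtain ⟨z, hz, h⟩ := exists_mem_box_s19 ha x
  rw [h r hper]
  exact hy hz

lemma exists_bound {n : ℕ} {a : Fin n → ℝ} (ha : ∀ k, 0 < a k) {A : (Fin n → ℝ) × ℝ → ℂ}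
    (hA : ContinuousOn A {p | 0 ≤ p.2})
    (hper : ∀ x τ k, A (x + (2 * a k) • (Pi.single k 1 : Fin n → ℝ), τ) = A (x, τ)) (s : ℝ) :
    ∃ M, ∀ x, ∀ t ∈ Icc 0 s, ‖A (x, t)‖ ≤ M := by
  obtain ⟨M, hM⟩ := ((isCompact_Icc (a := (0 : Fin n → ℝ)) (b := fun k => 2 * a k)).prod
    (isCompact_Icc (a := 0) (b := s))).exists_bound_of_continuousOn
    (hA.mono fun p hp => hp.2.1)
  refine ⟨M, fun x t ht => ?_⟩
  obtain ⟨z, hz, h⟩ := exists_mem_box_s19 ha x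
  rw [h (fun x => A (x, t)) fun x k => hper x t k]
  exact hM (z, t) ⟨hz, ht⟩

/-- Derivative of the rotated unknown `e^{-iθ₁} F` along a characteristic.  The phase condition
absorbs the factor `i`. -/
lemma hasDerivWithinAt_rotated {n : ℕ} {c : Fin n → ℝ} {F G H : (Fin n → ℝ) × ℝ → ℂ}
    {θ₁ θ₂ θ₃ : ℝ} (hθ : θ₁ + θ₂ + θ₃ = Real.pi / 2)
    (hF : ContDiffOn ℝ 1 F {p | 0 ≤ p.2})
    (hD : ∀ p : (Fin n → ℝ) × ℝ, 0 ≤ p.2 →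
      fderivWithin ℝ F {p | 0 ≤ p.2} p (c, 1) = Complex.I * conj (G p * H p))
    (x : Fin n → ℝ) (t : ℝ) (ht : t ∈ Ici (0 : ℝ)) :
    HasDerivWithinAt (fun t => Complex.exp (-(θ₁ * Complex.I)) * F (x + t • c, t))
      (conj (Complex.exp (-(θ₂ * Complex.I)) * G (x + t • c, t) *
        (Complex.exp (-(θ₃ * Complex.I)) * H (x + t • c, t)))) (Ici 0) t := by
  have hγ : HasDerivWithinAt (fun t : ℝ => (x + t • c, t)) (c, 1) (Ici 0) t := by
    have h1 : HasDerivAt (fun t : ℝ => x + t • c) c t := by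
      simpa using ((hasDerivAt_id t).smul_const c).const_add x
    exact (h1.prodMk (hasDerivAt_id t)).hasDerivWithinAt
  have hF' : HasFDerivWithinAt F (fderivWithin ℝ F {p | 0 ≤ p.2} (x + t • c, t))
      {p | 0 ≤ p.2} (x + t • c, t) :=
    (hF.differentiableOn one_ne_zero _ ht).hasFDerivWithinAt
  have h := (hF'.comp_hasDerivWithinAt (f := fun t : ℝ => (x + t • c, t)) t hγ fun t ht => ht).const_mul
    (Complex.exp (-(θ₁ * Complex.I)))
  rw [hD (x + t • c, t) ht] at h
  refine h.congr_deriv ?_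
  have key : Complex.exp (-(θ₁ * Complex.I)) * Complex.I
      = Complex.exp (θ₂ * Complex.I) * Complex.exp (θ₃ * Complex.I) := by
    refine (congrArg (Complex.exp (-(θ₁ * Complex.I)) * ·)
      Complex.exp_pi_div_two_mul_I.symm).trans ?_
    simp only [← Complex.exp_add]
    congr 1
    have : (θ₁ : ℂ) + θ₂ + θ₃ = Real.pi / 2 := by exact_mod_cast congrArg (Complex.ofReal) hθ
    linear_combination -Complex.I * this
  simp only [map_mul, ← Complex.exp_conj, map_neg, Complex.conj_ofReal, Complex.conj_I, mul_neg,
    neg_neg]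
  linear_combination (conj (G (x + t • c, t)) * conj (H (x + t • c, t))) * key

/-- Finite-time blow-up for the periodic three-wave system with negative wave
energy: if the initial data have strictly positive, C¹, periodic amplitudes
and spatially constant phases with θ₁ + θ₂ + θ₃ = π/2, then no global
(C¹, periodic) solution on ℝⁿ × [0,∞) exists. -/
theorem stmt_19 (n : ℕ) (c₁ c₂ c₃ : Fin n → ℝ) (a : Fin n → ℝ)
    (ha : ∀ k, 0 < a k) (θ₁ θ₂ θ₃ : ℝ) (hθ : θ₁ + θ₂ + θ₃ = Real.pi / 2)
    (r₁ r₂ r₃ : (Fin n → ℝ) → ℝ)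
    (hr₁ : ContDiff ℝ 1 r₁) (hr₂ : ContDiff ℝ 1 r₂) (hr₃ : ContDiff ℝ 1 r₃)
    (hpos : ∀ x, 0 < r₁ x ∧ 0 < r₂ x ∧ 0 < r₃ x)
    (hrper : ∀ x : Fin n → ℝ, ∀ k : Fin n,
      r₁ (x + (2 * a k) • (Pi.single k 1 : Fin n → ℝ)) = r₁ x ∧
      r₂ (x + (2 * a k) • (Pi.single k 1 : Fin n → ℝ)) = r₂ x ∧
      r₃ (x + (2 * a k) • (Pi.single k 1 : Fin n → ℝ)) = r₃ x)
    (S : Set ((Fin n → ℝ) × ℝ)) (hS : S = {p | 0 ≤ p.2}) :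
    ¬ ∃ A₁ A₂ A₃ : (Fin n → ℝ) × ℝ → ℂ,
      ContDiffOn ℝ 1 A₁ S ∧ ContDiffOn ℝ 1 A₂ S ∧ ContDiffOn ℝ 1 A₃ S ∧
      (∀ x : Fin n → ℝ, ∀ τ : ℝ, ∀ k : Fin n,
        A₁ (x + (2 * a k) • (Pi.single k 1 : Fin n → ℝ), τ) = A₁ (x, τ) ∧
        A₂ (x + (2 * a k) • (Pi.single k 1 : Fin n → ℝ), τ) = A₂ (x, τ) ∧
        A₃ (x + (2 * a k) • (Pi.single k 1 : Fin n → ℝ), τ) = A₃ (x, τ)) ∧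
      (∀ p ∈ S,
        fderivWithin ℝ A₁ S p (c₁, 1) = Complex.I * conj (A₂ p * A₃ p) ∧
        fderivWithin ℝ A₂ S p (c₂, 1) = Complex.I * conj (A₁ p * A₃ p) ∧
        fderivWithin ℝ A₃ S p (c₃, 1) = Complex.I * conj (A₁ p * A₂ p)) ∧
      (∀ x : Fin n → ℝ,
        A₁ (x, 0) = (r₁ x : ℂ) * Complex.exp (θ₁ * Complex.I) ∧
        A₂ (x, 0) = (r₂ x : ℂ) * Complex.exp (θ₂ * Complex.I) ∧
        A₃ (x, 0) = (r₃ x : ℂ) * Complex.exp (θ₃ * Complex.I)) := by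
  subst hS
  rintro ⟨A₁, A₂, A₃, s₁, s₂, s₃, hper, hD, h0⟩
  obtain ⟨m₁, hm₁, l₁⟩ := exists_pos_le ha hr₁.continuous (fun x => (hpos x).1)
    fun x k => (hrper x k).1
  obtain ⟨m₂, hm₂, l₂⟩ := exists_pos_le ha hr₂.continuous (fun x => (hpos x).2.1)
    fun x k => (hrper x k).2.1
  obtain ⟨m₃, hm₃, l₃⟩ := exists_pos_le ha hr₃.continuous (fun x => (hpos x).2.2)
    fun x k => (hrper x k).2.2
  obtain ⟨m, hm, e₁, e₂, e₃⟩ : ∃ m > 0, m ≤ m₁ ∧ m ≤ m₂ ∧ m ≤ m₃ :=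
    ⟨min m₁ (min m₂ m₃), by positivity, by simp, by simp, by simp⟩
  obtain ⟨M₁, u₁⟩ := exists_bound ha s₁.continuousOn (fun x τ k => (hper x τ k).1) m⁻¹
  obtain ⟨M₂, u₂⟩ := exists_bound ha s₂.continuousOn (fun x τ k => (hper x τ k).2.1) m⁻¹
  obtain ⟨M₃, u₃⟩ := exists_bound ha s₃.continuousOn (fun x τ k => (hper x τ k).2.2) m⁻¹
  -- At time `T = 1/m - 1/L < 1/m` the comparison function equals `L`, which exceeds `M₁`.
  obtain ⟨L, hmL, g₁, g₂, g₃⟩ : ∃ L, m ≤ L ∧ M₁ < L ∧ M₂ ≤ L ∧ M₃ ≤ L :=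
    ⟨max m (max (M₁ + 1) (max M₂ M₃)), by simp, by simp, by simp, by simp⟩
  have hL0 : 0 < L := hm.trans_le hmL
  have hT0 : 0 ≤ m⁻¹ - L⁻¹ := sub_nonneg.2 (inv_anti₀ hm hmL)
  have hTs : m⁻¹ - L⁻¹ < m⁻¹ := sub_lt_self _ (inv_pos.2 hL0)
  have hnorm : ∀ (θ : ℝ) (z : ℂ), ‖Complex.exp (-(θ * Complex.I)) * z‖ = ‖z‖ := by
    intro θ z
    have : -((θ : ℂ) * Complex.I) = ((-θ : ℝ) : ℂ) * Complex.I := by push_cast; ring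
    rw [norm_mul, this, Complex.norm_exp_ofReal_mul_I, one_mul]
  have hinit : ∀ (θ r : ℝ) (z : ℂ), z = r * Complex.exp (θ * Complex.I) → m ≤ r →
      (Complex.exp (-(θ * Complex.I)) * z).im = 0 ∧
        m⁻¹⁻¹ ≤ (Complex.exp (-(θ * Complex.I)) * z).re := by
    rintro θ r z rfl hr
    have : Complex.exp (-(θ * Complex.I)) * (r * Complex.exp (θ * Complex.I)) = r := by
      rw [mul_left_comm, ← Complex.exp_add, neg_add_cancel, Complex.exp_zero, mul_one]
    rw [this, inv_inv]
    exact ⟨Complex.ofReal_im r, hr⟩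
  have hφ : ∀ t ∈ Icc 0 (m⁻¹ - L⁻¹), (m⁻¹ - t)⁻¹ ≤ L := by
    intro t ht
    rw [inv_le_comm₀ (by linarith [ht.2]) hL0]
    linarith [ht.2]
  have key := phi_le_re
    (B₁ := fun p => Complex.exp (-(θ₁ * Complex.I)) * A₁ p)
    (B₂ := fun p => Complex.exp (-(θ₂ * Complex.I)) * A₂ p)
    (B₃ := fun p => Complex.exp (-(θ₃ * Complex.I)) * A₃ p) hTs hφ
    (hasDerivWithinAt_rotated hθ s₁ fun p hp => (hD p hp).1)
    (hasDerivWithinAt_rotated (by linarith) s₂ fun p hp => (hD p hp).2.1)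
    (hasDerivWithinAt_rotated (by linarith) s₃ fun p hp => (hD p hp).2.2)
    (fun x t ht => (hnorm _ _).trans_le ((u₁ x t ⟨ht.1, ht.2.trans hTs.le⟩).trans g₁.le))
    (fun x t ht => (hnorm _ _).trans_le ((u₂ x t ⟨ht.1, ht.2.trans hTs.le⟩).trans g₂))
    (fun x t ht => (hnorm _ _).trans_le ((u₃ x t ⟨ht.1, ht.2.trans hTs.le⟩).trans g₃))
    (fun x => hinit _ _ _ (h0 x).1 (e₁.trans (l₁ x)))
    (fun x => hinit _ _ _ (h0 x).2.1 (e₂.trans (l₂ x)))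
    (fun x => hinit _ _ _ (h0 x).2.2 (e₃.trans (l₃ x)))
    0 (right_mem_Icc.2 hT0)
  rw [sub_sub_cancel, inv_inv] at key
  have h1 := (key.trans (Complex.re_le_norm _)).trans_eq (hnorm _ _)
  linarith [u₁ 0 _ ⟨hT0, hTs.le⟩]
end
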